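/- Let F : ℝ × ℝ^d → ℝ^d satisfy |F(t,a) − F(t,b)| ≤ L₁|a − b| for all a,b ∈ ℝ^d and t ∈ [t₀, t_end]. Let y : [t₀, t_end] → ℝ^d be absolutely continuous with ∂_t y(t) = F(t, y(t)) for a.e. t and y(t₀) = y₀. Let 𝒯 be a time mesh of [t₀, t_end] and let z : [t₀, t_end] → ℝ^d be continuous with z(t₀) = y₀, such that on each T ∈ 𝒯 the residual R(t) := ∂_t z(t) − F(t, z(t)) restricted to T is absolutely continuous with square-integrable derivative and satisfies ∫_T R(t) dt = 0. Then sup_{t ∈ [t₀,t_end]} |y(t) − z(t)| ≤ e^{L₁(t_end − t₀)} · max_{T ∈ 𝒯} |T|^{3/2} ‖∂_t R‖_{L²(T)}. -/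

import Mathlib

open MeasureTheory Set

/-! The error `e = y - z` satisfies `e' + R = F(·, y) - F(·, z)`, so integrating the differential
equation and the Lipschitz bound give `‖e t‖ ≤ ‖∫_{t₀}^t R‖ + L₁ ∫_{t₀}^t ‖e‖`, and Grönwall's
inequality reduces everything to the *integral* of the residual. That integral vanishes at every
mesh point, so for `t` in a mesh interval `T` it only extends over a part of `T`. On `T` the
residual has mean zero and oscillates by at most `∫_T ‖∂ₜR‖ ≤ |T|^{1/2} ‖∂ₜR‖_{L²(T)}`; hence it is
bounded by this quantity, and its integral over a part of `T` by `|T|` times as much. -/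

section FiniteMeasure

variable {α : Type*} [MeasurableSpace α] {μ : Measure α} [IsFiniteMeasure μ]

theorem sq_integral_le_measureReal_univ_mul_integral_sq {f : α → ℝ} (hf : Integrable f μ)
    (hf2 : Integrable (fun x ↦ f x ^ 2) μ) :
    (∫ x, f x ∂μ) ^ 2 ≤ μ.real univ * ∫ x, f x ^ 2 ∂μ := by
  rcases eq_zero_or_neZero μ with rfl | _
  · simp
  have jensen : (⨍ x, f x ∂μ) ^ 2 ≤ ⨍ x, f x ^ 2 ∂μ :=
    even_two.convexOn_pow.map_average_le (continuous_pow 2).continuousOn isClosed_univ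
      (.of_forall fun _ ↦ mem_univ _) hf hf2
  rw [← measure_smul_average μ f, ← measure_smul_average μ fun x ↦ f x ^ 2]
  calc (μ.real univ • ⨍ x, f x ∂μ) ^ 2
      = μ.real univ ^ 2 * (⨍ x, f x ∂μ) ^ 2 := by rw [smul_eq_mul, mul_pow]
    _ ≤ μ.real univ ^ 2 * ⨍ x, f x ^ 2 ∂μ := by gcongr
    _ = μ.real univ * (μ.real univ • ⨍ x, f x ^ 2 ∂μ) := by rw [smul_eq_mul]; ring

theorem norm_le_of_integral_eq_zero_of_norm_sub_le {E : Type*} [NormedAddCommGroup E]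
    [NormedSpace ℝ E] [CompleteSpace E] [NeZero μ] {f : α → E} {x : E} {K : ℝ}
    (hf : Integrable f μ) (hzero : ∫ s, f s ∂μ = 0) (hK : ∀ᵐ s ∂μ, ‖f s - x‖ ≤ K) :
    ‖x‖ ≤ K := by
  have average_mem : ⨍ s, f s ∂μ ∈ Metric.closedBall x K :=
    (convex_closedBall x K).average_mem Metric.isClosed_closedBall
      (hK.mono fun _ ↦ mem_closedBall_iff_norm.2) hf
  simpa [average_eq, hzero] using average_mem

end FiniteMeasure

section Interval

variable {E : Type*} [NormedAddCommGroup E] {a b s t : ℝ}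

theorem intervalIntegrable_of_mem_Icc {μ : Measure ℝ} {f : ℝ → E}
    (hf : IntervalIntegrable f μ a b) (hs : s ∈ Icc a b) (ht : t ∈ Icc a b) :
    IntervalIntegrable f μ s t :=
  hf.mono_set (uIcc_subset_uIcc (Icc_subset_uIcc hs) (Icc_subset_uIcc ht))

variable [NormedSpace ℝ E]

theorem norm_integral_le_integral_norm_of_mem_Icc {μ : Measure ℝ} {f : ℝ → E}
    (hf : IntervalIntegrable f μ a b) (hs : s ∈ Icc a b) (ht : t ∈ Icc a b) :
    ‖∫ x in s..t, f x ∂μ‖ ≤ ∫ x in a..b, ‖f x‖ ∂μ :=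
  calc ‖∫ x in s..t, f x ∂μ‖
      ≤ |∫ x in s..t, ‖f x‖ ∂μ| := intervalIntegral.norm_integral_le_abs_integral_norm
    _ ≤ |∫ x in a..b, ‖f x‖ ∂μ| :=
        intervalIntegral.abs_integral_mono_interval
          (uIoc_subset_uIoc_of_uIcc_subset_uIcc <|
            uIcc_subset_uIcc (Icc_subset_uIcc hs) (Icc_subset_uIcc ht))
          (.of_forall fun _ ↦ norm_nonneg _) hf.norm
    _ = ∫ x in a..b, ‖f x‖ ∂μ :=
        abs_of_nonneg (intervalIntegral.integral_nonneg (hs.1.trans hs.2) fun _ _ ↦ norm_nonneg _)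

theorem integral_le_sqrt_mul_sqrt_integral_sq (hab : a ≤ b) {g : ℝ → ℝ}
    (hg : IntervalIntegrable g volume a b)
    (hg2 : IntervalIntegrable (fun x ↦ g x ^ 2) volume a b) :
    ∫ x in a..b, g x ≤ √(b - a) * √(∫ x in a..b, g x ^ 2) := by
  rw [← Real.sqrt_mul (sub_nonneg.2 hab)]
  apply Real.le_sqrt_of_sq_le
  simpa [intervalIntegral.integral_of_le hab, hab] using
    sq_integral_le_measureReal_univ_mul_integral_sq hg.1 hg2.1

variable [CompleteSpace E]

theorem norm_integral_le_mul_of_integral_eq_zero_of_norm_sub_le {f : ℝ → E} {K : ℝ}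
    (hf : IntervalIntegrable f volume a b) (hzero : ∫ x in a..b, f x = 0)
    (hK : ∀ x ∈ Ioo a b, ∀ y ∈ Ioo a b, ‖f y - f x‖ ≤ K) (ht : t ∈ Icc a b) :
    ‖∫ x in a..t, f x‖ ≤ K * (t - a) := by
  have norm_le : ∀ x ∈ Ioo a t, ‖f x‖ ≤ K := by
    intro x hx
    have hx' : x ∈ Ioo a b := ⟨hx.1, hx.2.trans_le ht.2⟩
    have : NeZero (volume.restrict (Ioo a b)) := ⟨by simpa using hx'.1.trans hx'.2⟩
    have hzero' : ∫ y in Ioo a b, f y = 0 := by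
      rwa [← integral_Ioc_eq_integral_Ioo, ← intervalIntegral.integral_of_le (ht.1.trans ht.2)]
    exact norm_le_of_integral_eq_zero_of_norm_sub_le (hf.1.mono_set Ioo_subset_Ioc_self) hzero'
      (ae_restrict_of_forall_mem measurableSet_Ioo (hK x hx'))
  rw [intervalIntegral.integral_of_le ht.1, integral_Ioc_eq_integral_Ioo]
  simpa [ht.1] using
    norm_setIntegral_le_of_norm_le_const (μ := volume) measure_Ioo_lt_top norm_le

theorem norm_integral_le_rpow_mul_sqrt_of_integral_eq_zero {f f' : ℝ → E} {c : E}
    (hf : IntervalIntegrable f volume a b) (hf' : IntervalIntegrable f' volume a b)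
    (hf'2 : IntervalIntegrable (fun x ↦ ‖f' x‖ ^ 2) volume a b)
    (hrep : ∀ x ∈ Ioo a b, f x = c + ∫ s in a..x, f' s)
    (hzero : ∫ x in a..b, f x = 0) (ht : t ∈ Icc a b) :
    ‖∫ x in a..t, f x‖ ≤ (b - a) ^ (3 / 2 : ℝ) * √(∫ x in a..b, ‖f' x‖ ^ 2) := by
  have hab : a ≤ b := ht.1.trans ht.2
  have ha : a ∈ Icc a b := left_mem_Icc.2 hab
  have oscillation : ∀ x ∈ Ioo a b, ∀ y ∈ Ioo a b, ‖f y - f x‖ ≤ ∫ s in a..b, ‖f' s‖ := by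
    intro x hx y hy
    rw [hrep x hx, hrep y hy, add_sub_add_left_eq_sub,
      intervalIntegral.integral_interval_sub_left
        (intervalIntegrable_of_mem_Icc hf' ha (Ioo_subset_Icc_self hy))
        (intervalIntegrable_of_mem_Icc hf' ha (Ioo_subset_Icc_self hx))]
    exact norm_integral_le_integral_norm_of_mem_Icc hf' (Ioo_subset_Icc_self hx)
      (Ioo_subset_Icc_self hy)
  calc ‖∫ x in a..t, f x‖
      ≤ (∫ s in a..b, ‖f' s‖) * (t - a) :=
        norm_integral_le_mul_of_integral_eq_zero_of_norm_sub_le hf hzero oscillation ht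
    _ ≤ (√(b - a) * √(∫ x in a..b, ‖f' x‖ ^ 2)) * (b - a) :=
        mul_le_mul (integral_le_sqrt_mul_sqrt_integral_sq hab hf'.norm hf'2)
          (sub_le_sub_right ht.2 a) (sub_nonneg.2 ht.1) (by positivity)
    _ = (b - a) ^ (3 / 2 : ℝ) * √(∫ x in a..b, ‖f' x‖ ^ 2) := by
        rw [show (3 / 2 : ℝ) = 1 / 2 + 1 by norm_num,
          Real.rpow_add_one' (sub_nonneg.2 hab) (by norm_num), ← Real.sqrt_eq_rpow]
        ring

end Interval

section Gronwall

open scoped Topology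

variable {a b L M : ℝ}

theorem le_mul_exp_of_le_add_mul_integral (hL : 0 ≤ L) {u : ℝ → ℝ} (hu : ContinuousOn u (Icc a b))
    (hle : ∀ t ∈ Icc a b, u t ≤ M + L * ∫ s in a..t, u s) :
    ∀ t ∈ Icc a b, u t ≤ M * Real.exp (L * (t - a)) := by
  intro t ht
  have hab : a ≤ b := ht.1.trans ht.2
  have hint : IntervalIntegrable u volume a b := hu.intervalIntegrable_of_Icc hab
  have continuousOn_majorant : ContinuousOn (fun t ↦ M + L * ∫ s in a..t, u s) (Icc a b) := by
    rw [← uIcc_of_le hab]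
    exact continuousOn_const.add (continuousOn_const.mul
      (intervalIntegral.continuousOn_primitive_interval' hint left_mem_uIcc))
  have hasDeriv_majorant : ∀ t ∈ Ico a b,
      HasDerivWithinAt (fun t ↦ M + L * ∫ s in a..t, u s) (L * u t) (Ici t) t := by
    intro t ht
    have ht' : t ∈ Icc a b := Ico_subset_Icc_self ht
    have nhdsGT_le : 𝓝[>] t ≤ 𝓝[Icc a b] t := nhdsWithin_le_of_mem (Icc_mem_nhdsGT_of_mem ht)
    exact ((intervalIntegral.integral_hasDerivWithinAt_right
      (intervalIntegrable_of_mem_Icc hint (left_mem_Icc.2 hab) ht')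
      ((hu.stronglyMeasurableAtFilter_nhdsWithin measurableSet_Icc t).filter_mono nhdsGT_le)
      ((hu t ht').mono_left nhdsGT_le)).const_mul L).const_add M
  have majorant_le := le_gronwallBound_of_liminf_deriv_right_le (δ := M) (ε := 0) (K := L)
    continuousOn_majorant
    (fun t ht _ hr ↦ (hasDeriv_majorant t ht).liminf_right_slope_le hr) (by simp)
    (fun t ht ↦ by
      rw [add_zero]
      exact mul_le_mul_of_nonneg_left (hle t (Ico_subset_Icc_self ht)) hL) t ht
  rw [gronwallBound_ε0] at majorant_le
  exact (hle t ht).trans majorant_le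

theorem norm_le_mul_exp_of_norm_deriv_add_le {E : Type*} [NormedAddCommGroup E] [NormedSpace ℝ E]
    {e e' r : ℝ → E} (hL : 0 ≤ L) (he' : IntervalIntegrable e' volume a b)
    (he : ∀ t ∈ Icc a b, e t = e a + ∫ s in a..t, e' s)
    (hr : IntervalIntegrable r volume a b) (hrM : ∀ t ∈ Icc a b, ‖∫ s in a..t, r s‖ ≤ M)
    (hle : ∀ᵐ s ∂volume.restrict (Icc a b), ‖e' s + r s‖ ≤ L * ‖e s‖) :
    ∀ t ∈ Icc a b, ‖e t‖ ≤ (‖e a‖ + M) * Real.exp (L * (t - a)) := by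
  rcases lt_or_ge b a with hba | hab
  · simp [hba]
  have ha : a ∈ Icc a b := left_mem_Icc.2 hab
  have continuousOn_norm : ContinuousOn (fun t ↦ ‖e t‖) (Icc a b) := by
    refine ContinuousOn.norm (ContinuousOn.congr ?_ he)
    rw [← uIcc_of_le hab]
    exact continuousOn_const.add
      (intervalIntegral.continuousOn_primitive_interval' he' left_mem_uIcc)
  refine le_mul_exp_of_le_add_mul_integral hL continuousOn_norm fun t ht ↦ ?_
  have split : e t = e a + (∫ s in a..t, (e' s + r s)) - ∫ s in a..t, r s := by
    rw [intervalIntegral.integral_add (intervalIntegrable_of_mem_Icc he' ha ht)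
      (intervalIntegrable_of_mem_Icc hr ha ht), he t ht]
    abel
  have norm_integral_le : ‖∫ s in a..t, (e' s + r s)‖ ≤ L * ∫ s in a..t, ‖e s‖ := by
    rw [← intervalIntegral.integral_const_mul]
    refine intervalIntegral.norm_integral_le_of_norm_le ht.1 ?_
      ((intervalIntegrable_of_mem_Icc (continuousOn_norm.intervalIntegrable_of_Icc hab)
        ha ht).const_mul L)
    filter_upwards [(ae_restrict_iff' measurableSet_Icc).1 hle] with s hs hst
    exact hs ⟨hst.1.le, hst.2.trans ht.2⟩
  calc ‖e t‖
      ≤ ‖e a‖ + ‖∫ s in a..t, (e' s + r s)‖ + ‖∫ s in a..t, r s‖ :=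
        split ▸ (norm_sub_le _ _).trans (add_le_add_left (norm_add_le _ _) _)
    _ ≤ ‖e a‖ + L * (∫ s in a..t, ‖e s‖) + M := by gcongr; exact hrM t ht
    _ = ‖e a‖ + M + L * ∫ s in a..t, ‖e s‖ := by ring

theorem nonneg_of_norm_sub_le_mul {E G : Type*} [NormedAddCommGroup E] [Nontrivial E]
    [SeminormedAddCommGroup G] {f : E → G} (hf : ∀ u v, ‖f u - f v‖ ≤ L * ‖u - v‖) : 0 ≤ L := by
  obtain ⟨u, hu⟩ := exists_ne (0 : E)
  exact nonneg_of_mul_nonneg_left ((norm_nonneg _).trans (hf u 0)) (by simpa using hu)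

theorem norm_sub_le_exp_mul_of_norm_integral_residual_le {E : Type*} [NormedAddCommGroup E]
    [NormedSpace ℝ E] {F : ℝ → E → E} {y y' z z' R : ℝ → E}
    (hF : ∀ t ∈ Icc a b, ∀ u v, ‖F t u - F t v‖ ≤ L * ‖u - v‖)
    (hy' : IntervalIntegrable y' volume a b) (hy : ∀ t ∈ Icc a b, y t = y a + ∫ s in a..t, y' s)
    (hode : ∀ᵐ t ∂volume.restrict (Icc a b), y' t = F t (y t))
    (hz' : IntervalIntegrable z' volume a b) (hz : ∀ t ∈ Icc a b, z t = z a + ∫ s in a..t, z' s)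
    (hR : ∀ᵐ t ∂volume.restrict (Icc a b), R t = z' t - F t (z t))
    (hRint : IntervalIntegrable R volume a b) (hRM : ∀ t ∈ Icc a b, ‖∫ s in a..t, R s‖ ≤ M) :
    ∀ t ∈ Icc a b, ‖y t - z t‖ ≤ Real.exp (L * (b - a)) * (‖y a - z a‖ + M) := by
  intro t ht
  have ha : a ∈ Icc a b := left_mem_Icc.2 (ht.1.trans ht.2)
  have hM : 0 ≤ M := (norm_nonneg _).trans (hRM t ht)
  rcases subsingleton_or_nontrivial E with _ | _
  · rw [Subsingleton.elim (y t) (z t), sub_self, norm_zero]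
    positivity
  have error_rep : ∀ t ∈ Icc a b, y t - z t = y a - z a + ∫ s in a..t, (y' s - z' s) := by
    intro t ht
    rw [intervalIntegral.integral_sub (intervalIntegrable_of_mem_Icc hy' ha ht)
      (intervalIntegrable_of_mem_Icc hz' ha ht), hy t ht, hz t ht, add_sub_add_comm]
  have error_ode : ∀ᵐ s ∂volume.restrict (Icc a b), ‖y' s - z' s + R s‖ ≤ L * ‖y s - z s‖ := by
    filter_upwards [hode, hR, ae_restrict_mem measurableSet_Icc] with s hys hRs hs
    simpa [hys, hRs] using hF s hs (y s) (z s)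
  have hL : 0 ≤ L := nonneg_of_norm_sub_le_mul (hF a ha)
  calc ‖y t - z t‖
      ≤ (‖y a - z a‖ + M) * Real.exp (L * (t - a)) :=
        norm_le_mul_exp_of_norm_deriv_add_le hL (hy'.sub hz') error_rep hRint hRM error_ode t ht
    _ ≤ (‖y a - z a‖ + M) * Real.exp (L * (b - a)) := by gcongr; exact ht.2
    _ = Real.exp (L * (b - a)) * (‖y a - z a‖ + M) := mul_comm _ _

end Gronwall

section Mesh

variable {n : ℕ}

theorem exists_mem_Icc_castSucc_succ {α : Type*} [LinearOrder α] (hn : 0 < n)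
    {p : Fin (n + 1) → α} {t : α} (ht : t ∈ Icc (p 0) (p (Fin.last n))) :
    ∃ i : Fin n, t ∈ Icc (p i.castSucc) (p i.succ) := by
  obtain ⟨m, rfl⟩ := Nat.exists_eq_succ_of_ne_zero hn.ne'
  by_contra! not_mem
  have succ_lt : ∀ i : Fin (m + 1), p i.castSucc ≤ t → p i.succ < t :=
    fun i hi ↦ lt_of_not_ge fun hi' ↦ not_mem i ⟨hi, hi'⟩
  have apply_le : ∀ k, p k ≤ t := Fin.induction ht.1 fun i hi ↦ (succ_lt i hi).le
  exact (succ_lt (Fin.last m) (apply_le _)).not_ge ht.2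

theorem mem_Icc_zero_last_of_monotone {α : Type*} [Preorder α] {p : Fin (n + 1) → α}
    (hp : Monotone p) (k : Fin (n + 1)) : p k ∈ Icc (p 0) (p (Fin.last n)) :=
  ⟨hp k.zero_le, hp k.le_last⟩

variable {E : Type*} [NormedAddCommGroup E] [NormedSpace ℝ E] {μ : Measure ℝ}
  {p : Fin (n + 1) → ℝ} {f g : ℝ → E} {t : ℝ}

theorem integral_eq_sub_of_forall_integral_castSucc_succ (hp : Monotone p)
    (hf : IntervalIntegrable f μ (p 0) (p (Fin.last n))) {v : Fin (n + 1) → E}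
    (hv : ∀ i : Fin n, ∫ x in p i.castSucc..p i.succ, f x ∂μ = v i.succ - v i.castSucc)
    (k : Fin (n + 1)) : ∫ x in p 0..p k, f x ∂μ = v k - v 0 := by
  induction k using Fin.induction with
  | zero => simp
  | succ i ih =>
    have hint : ∀ j k, IntervalIntegrable f μ (p j) (p k) := fun j k ↦
      intervalIntegrable_of_mem_Icc hf (mem_Icc_zero_last_of_monotone hp j)
        (mem_Icc_zero_last_of_monotone hp k)
    rw [← intervalIntegral.integral_add_adjacent_intervals (hint 0 i.castSucc) (hint _ _), ih, hv]
    abel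

theorem exists_integral_eq_sub_add_integral (hn : 0 < n) (hp : Monotone p)
    (hf : IntervalIntegrable f μ (p 0) (p (Fin.last n))) {v : Fin (n + 1) → E}
    (hv : ∀ i : Fin n, ∫ x in p i.castSucc..p i.succ, f x ∂μ = v i.succ - v i.castSucc)
    (ht : t ∈ Icc (p 0) (p (Fin.last n))) :
    ∃ i : Fin n, t ∈ Icc (p i.castSucc) (p i.succ) ∧
      ∫ x in p 0..t, f x ∂μ = v i.castSucc - v 0 + ∫ x in p i.castSucc..t, f x ∂μ := by
  obtain ⟨i, hi⟩ := exists_mem_Icc_castSucc_succ hn ht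
  have hmem := mem_Icc_zero_last_of_monotone hp
  refine ⟨i, hi, ?_⟩
  rw [← integral_eq_sub_of_forall_integral_castSucc_succ hp hf hv,
    intervalIntegral.integral_add_adjacent_intervals
      (intervalIntegrable_of_mem_Icc hf (hmem 0) (hmem _))
      (intervalIntegrable_of_mem_Icc hf (hmem _) ht)]

theorem eq_add_integral_of_forall_mem_Icc_castSucc_succ (hn : 0 < n) (hp : Monotone p)
    (hf : IntervalIntegrable f μ (p 0) (p (Fin.last n)))
    (hg : ∀ i : Fin n, ∀ t ∈ Icc (p i.castSucc) (p i.succ),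
      g t = g (p i.castSucc) + ∫ x in p i.castSucc..t, f x ∂μ)
    (ht : t ∈ Icc (p 0) (p (Fin.last n))) : g t = g (p 0) + ∫ x in p 0..t, f x ∂μ := by
  have increment : ∀ i : Fin n,
      ∫ x in p i.castSucc..p i.succ, f x ∂μ = g (p i.succ) - g (p i.castSucc) := fun i ↦
    eq_sub_of_add_eq' (hg i _ (right_mem_Icc.2 (hp i.castSucc_le_succ))).symm
  obtain ⟨i, hi, integral_eq⟩ :=
    exists_integral_eq_sub_add_integral hn hp hf (v := g ∘ p) increment ht
  rw [integral_eq, hg i t hi]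
  simp only [Function.comp_apply]
  abel

theorem norm_integral_le_of_forall_integral_castSucc_succ_eq_zero (hn : 0 < n) (hp : Monotone p)
    (hf : IntervalIntegrable f μ (p 0) (p (Fin.last n)))
    (hzero : ∀ i : Fin n, ∫ x in p i.castSucc..p i.succ, f x ∂μ = 0) {M : ℝ}
    (hM : ∀ i : Fin n, ∀ t ∈ Icc (p i.castSucc) (p i.succ),
      ‖∫ x in p i.castSucc..t, f x ∂μ‖ ≤ M)
    (ht : t ∈ Icc (p 0) (p (Fin.last n))) : ‖∫ x in p 0..t, f x ∂μ‖ ≤ M := by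
  obtain ⟨i, hi, integral_eq⟩ :=
    exists_integral_eq_sub_add_integral hn hp hf (v := 0) (by simpa using hzero) ht
  simpa [integral_eq] using hM i t hi

theorem norm_integral_le_sup'_rpow_mul_sqrt [CompleteSpace E] (hn : 0 < n) (hp : Monotone p)
    {f' : ℝ → E} (hf : IntervalIntegrable f volume (p 0) (p (Fin.last n)))
    (hf' : IntervalIntegrable f' volume (p 0) (p (Fin.last n)))
    (hf'2 : IntervalIntegrable (fun x ↦ ‖f' x‖ ^ 2) volume (p 0) (p (Fin.last n)))
    (hrep : ∀ i : Fin n, ∃ c : E, ∀ x ∈ Ioo (p i.castSucc) (p i.succ),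
      f x = c + ∫ s in p i.castSucc..x, f' s)
    (hzero : ∀ i : Fin n, ∫ x in p i.castSucc..p i.succ, f x = 0) :
    ∀ t ∈ Icc (p 0) (p (Fin.last n)), ‖∫ x in p 0..t, f x‖ ≤
      Finset.univ.sup' (Finset.univ_nonempty_iff.mpr (Fin.pos_iff_nonempty.mp hn))
        (fun i : Fin n ↦ (p i.succ - p i.castSucc) ^ (3 / 2 : ℝ) *
          √(∫ x in p i.castSucc..p i.succ, ‖f' x‖ ^ 2)) := by
  intro t ht
  have hmem := mem_Icc_zero_last_of_monotone hp
  refine norm_integral_le_of_forall_integral_castSucc_succ_eq_zero hn hp hf hzero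
    (fun i t ht ↦ ?_) ht
  obtain ⟨c, hc⟩ := hrep i
  exact Finset.le_sup'_of_le _ (Finset.mem_univ i) <|
    norm_integral_le_rpow_mul_sqrt_of_integral_eq_zero
      (intervalIntegrable_of_mem_Icc hf (hmem _) (hmem _))
      (intervalIntegrable_of_mem_Icc hf' (hmem _) (hmem _))
      (intervalIntegrable_of_mem_Icc hf'2 (hmem _) (hmem _)) hc (hzero i) ht

end Mesh

theorem stmt_4_general {E : Type*} [NormedAddCommGroup E] [NormedSpace ℝ E] [CompleteSpace E]
    {t0 tend L1 : ℝ} {F : ℝ → E → E}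
    (hF : ∀ t ∈ Icc t0 tend, ∀ a b : E, ‖F t a - F t b‖ ≤ L1 * ‖a - b‖)
    {n : ℕ} (hn : 0 < n) {pts : Fin (n + 1) → ℝ}
    (hmono : Monotone pts) (hfirst : pts 0 = t0) (hlast : pts (Fin.last n) = tend)
    {y0 : E} {y y' z z' R R' : ℝ → E}
    (hy'int : IntervalIntegrable y' volume t0 tend)
    (hyrep : ∀ t ∈ Icc t0 tend, y t = y0 + ∫ s in t0..t, y' s)
    (hyode : ∀ᵐ t ∂(volume.restrict (Icc t0 tend)), y' t = F t (y t))
    (hz0 : z t0 = y0)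
    (hz'int : IntervalIntegrable z' volume t0 tend)
    (hzrep : ∀ i : Fin n, ∀ t ∈ Icc (pts i.castSucc) (pts i.succ),
      z t = z (pts i.castSucc) + ∫ s in (pts i.castSucc)..t, z' s)
    (hR : ∀ t, R t = z' t - F t (z t))
    (hRint : IntervalIntegrable R volume t0 tend)
    (hR'int : IntervalIntegrable R' volume t0 tend)
    (hR'sq : IntervalIntegrable (fun t ↦ ‖R' t‖ ^ 2) volume t0 tend)
    (hRAC : ∀ i : Fin n, ∃ c : E, ∀ t ∈ Ioo (pts i.castSucc) (pts i.succ),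
      R t = c + ∫ s in (pts i.castSucc)..t, R' s)
    (hmean : ∀ i : Fin n, (∫ t in (pts i.castSucc)..(pts i.succ), R t) = 0) :
    ∀ t ∈ Icc t0 tend,
      ‖y t - z t‖ ≤ Real.exp (L1 * (tend - t0)) *
        Finset.univ.sup' (Finset.univ_nonempty_iff.mpr (Fin.pos_iff_nonempty.mp hn))
          (fun i : Fin n ↦ (pts i.succ - pts i.castSucc) ^ ((3 : ℝ) / 2) *
            √(∫ t in (pts i.castSucc)..(pts i.succ), ‖R' t‖ ^ 2)) := by
  subst hfirst hlast hz0
  have residual_le := norm_integral_le_sup'_rpow_mul_sqrt hn hmono hRint hR'int hR'sq hRAC hmean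
  intro t ht
  have hab : pts 0 ≤ pts (Fin.last n) := ht.1.trans ht.2
  have y_zero : y (pts 0) = z (pts 0) := by simp [hyrep _ (left_mem_Icc.2 hab)]
  have z_rep : ∀ t ∈ Icc (pts 0) (pts (Fin.last n)), z t = z (pts 0) + ∫ s in pts 0..t, z' s :=
    fun t ↦ eq_add_integral_of_forall_mem_Icc_castSucc_succ hn hmono hz'int hzrep
  have stability := norm_sub_le_exp_mul_of_norm_integral_residual_le hF hy'int (y_zero ▸ hyrep)
    hyode hz'int z_rep (.of_forall hR) hRint residual_le t ht
  rwa [y_zero, sub_self, norm_zero, zero_add] at stability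

/-- pointwise a posteriori bound.
Under the assumptions of the reliability lemma, the pointwise error satisfies
`‖y t − z t‖ ≤ e^{L₁ (t_end − t₀)} · max_{T ∈ 𝒯} |T|^{3/2} ‖∂ₜ R‖_{L²(T)}`
for every `t ∈ [t₀, t_end]`. -/
theorem stmt_4
    (d : ℕ) (hd : 1 ≤ d) (t0 tend : ℝ) (ht : t0 < tend)
    (L1 : ℝ)
    (F : ℝ → EuclideanSpace ℝ (Fin d) → EuclideanSpace ℝ (Fin d))
    (hF : ∀ t ∈ Icc t0 tend, ∀ a b : EuclideanSpace ℝ (Fin d),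
      ‖F t a - F t b‖ ≤ L1 * ‖a - b‖)
    -- the time mesh, given by its break points:
    (n : ℕ) (hn : 0 < n) (pts : Fin (n + 1) → ℝ)
    (hmono : StrictMono pts) (hfirst : pts 0 = t0) (hlast : pts (Fin.last n) = tend)
    (y0 : EuclideanSpace ℝ (Fin d))
    (y y' z z' R R' : ℝ → EuclideanSpace ℝ (Fin d))
    -- `y` is absolutely continuous with derivative `y'` and solves the ODE a.e.:
    (hy'int : IntervalIntegrable y' volume t0 tend)
    (hyrep : ∀ t ∈ Icc t0 tend, y t = y0 + ∫ s in t0..t, y' s)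
    (hyode : ∀ᵐ t ∂(volume.restrict (Icc t0 tend)), y' t = F t (y t))
    -- `z` is continuous, `z t₀ = y₀`, and on each mesh interval absolutely
    -- continuous with derivative `z'`:
    (hzcont : ContinuousOn z (Icc t0 tend))
    (hz0 : z t0 = y0)
    (hz'int : IntervalIntegrable z' volume t0 tend)
    (hzrep : ∀ i : Fin n, ∀ t ∈ Icc (pts i.castSucc) (pts i.succ),
      z t = z (pts i.castSucc) + ∫ s in (pts i.castSucc)..t, z' s)
    -- the residual and its per-interval derivative:
    (hR : ∀ t, R t = z' t - F t (z t))
    (hRint : IntervalIntegrable R volume t0 tend)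
    (hR'int : IntervalIntegrable R' volume t0 tend)
    (hR'sq : IntervalIntegrable (fun t => ‖R' t‖ ^ 2) volume t0 tend)
    (hRAC : ∀ i : Fin n, ∃ c : EuclideanSpace ℝ (Fin d),
      ∀ t ∈ Ioo (pts i.castSucc) (pts i.succ),
        R t = c + ∫ s in (pts i.castSucc)..t, R' s)
    -- the residual has mean zero on each mesh interval:
    (hmean : ∀ i : Fin n, (∫ t in (pts i.castSucc)..(pts i.succ), R t) = 0) :
    ∀ t ∈ Icc t0 tend,
      ‖y t - z t‖ ≤ Real.exp (L1 * (tend - t0)) *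
        Finset.univ.sup' (Finset.univ_nonempty_iff.mpr (Fin.pos_iff_nonempty.mp hn))
          (fun i : Fin n => (pts i.succ - pts i.castSucc) ^ ((3 : ℝ) / 2) *
            Real.sqrt (∫ t in (pts i.castSucc)..(pts i.succ), ‖R' t‖ ^ 2)) := by
  exact stmt_4_general hF hn hmono.monotone hfirst hlast hy'int hyrep hyode hz0 hz'int hzrep hR
    hRint hR'int hR'sq hRAC hmean
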